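/- arXiv:1706.07880 — 2 statements merged into one kernel-verified Lean document; each statement's English description precedes it below -/
import Mathlib

section
/- (Theorem 2: convergence of CDSGD with fixed step size, nonconvex case.) Let (Ω, ℱ, P) be a probability space with filtration (ℱ_k)_{k∈ℕ}. Let V : ℝ^N → ℝ be differentiable with ∇V Lipschitz continuous with constant γ̂ > 0 and bounded below by V_inf ∈ ℝ. Let x₁ ∈ ℝ^N, and let (X_k), (G_k) be random vectors with X₁ = x₁ almost surely, X_k ℱ_k-measurable, G_k ℱ_{k+1}-measurable with E[‖G_k‖²] < ∞, and X_{k+1} = X_k − α·G_k. Assume for constants ζ₁ > 0, Q ≥ 0, Q_m ≥ ζ₁² that almost surely ⟨∇V(X_k), E[G_k | ℱ_k]⟩ ≥ ζ₁·‖∇V(X_k)‖² and E[‖G_k‖² | ℱ_k] ≤ Q + Q_m·‖∇V(X_k)‖² for all k, and 0 < α ≤ ζ₁/(γ̂·Q_m). Then for every m ≥ 1, Σ_{k=1}^{m} E[‖∇V(X_k)‖²] ≤ (γ̂·m·α·Q)/ζ₁ + 2·(V(x₁) − V_inf)/(ζ₁·α). -/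
open MeasureTheory Filter
open scoped RealInnerProductSpace BigOperators

/-- Descent lemma. -/
lemma descent_aux {N : ℕ} (V : EuclideanSpace ℝ (Fin N) → ℝ) (γh : ℝ) (hγh : 0 < γh)
    (hdiff : Differentiable ℝ V)
    (hLip : LipschitzWith γh.toNNReal (gradient V)) (x d : EuclideanSpace ℝ (Fin N)) :
    V (x + d) ≤ V x + ⟪gradient V x, d⟫ + γh / 2 * ‖d‖ ^ 2 := by
  have hder : ∀ t : ℝ, HasDerivAt
      (fun t : ℝ => V (x + t • d) - t * ⟪gradient V x, d⟫ - γh / 2 * ‖d‖ ^ 2 * t ^ 2)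
      (⟪gradient V (x + t • d), d⟫ - ⟪gradient V x, d⟫ - γh / 2 * ‖d‖ ^ 2 * (2 * t)) t := by
    intro t
    have h1 : HasDerivAt (fun t : ℝ => x + t • d) d t := by
      simpa using ((hasDerivAt_id t).smul_const d).const_add x
    have h2 : HasFDerivAt V _ (x + t • d) := (hdiff (x + t • d)).hasGradientAt.hasFDerivAt
    have h3 := h2.comp_hasDerivAt t h1
    have h4 := (hasDerivAt_id t).mul_const (⟪gradient V x, d⟫ : ℝ)
    have h5 := ((hasDerivAt_id t).pow 2).const_mul (γh / 2 * ‖d‖ ^ 2)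
    refine ((h3.sub h4).sub h5).congr_deriv ?_
    simp
  have hanti : AntitoneOn
      (fun t : ℝ => V (x + t • d) - t * ⟪gradient V x, d⟫ - γh / 2 * ‖d‖ ^ 2 * t ^ 2)
      (Set.Icc 0 1) := by
    refine antitoneOn_of_deriv_nonpos (convex_Icc 0 1)
      (fun t _ => (hder t).continuousAt.continuousWithinAt)
      (fun t _ => (hder t).differentiableAt.differentiableWithinAt) ?_
    intro t ht
    rw [interior_Icc] at ht
    rw [(hder t).deriv, ← inner_sub_left]
    have h1 := real_inner_le_norm (gradient V (x + t • d) - gradient V x) d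
    have h2 := hLip.norm_sub_le (x + t • d) x
    rw [add_sub_cancel_left, norm_smul, Real.norm_of_nonneg ht.1.le,
      Real.coe_toNNReal _ hγh.le] at h2
    have h3 := mul_le_mul_of_nonneg_right h2 (norm_nonneg d)
    nlinarith
  have := hanti (Set.left_mem_Icc.2 zero_le_one) (Set.right_mem_Icc.2 zero_le_one) zero_le_one
  simp only [zero_smul, one_smul, add_zero, zero_mul, one_mul, one_pow, mul_one, ne_eq,
    OfNat.ofNat_ne_zero, not_false_eq_true, zero_pow, mul_zero, sub_zero] at this
  linarith

/-- Theorem 2 (convergence of CDSGD with fixed step size, nonconvex case):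
`Σ_{k=1}^{m} E[‖∇V(X_k)‖²] ≤ (γ̂·m·α·Q)/ζ₁ + 2·(V(x₁) − V_inf)/(ζ₁·α)`. -/
theorem cdsgd_fixed_step_nonconvex {N : ℕ} {Ω : Type*} {m0 : MeasurableSpace Ω}
    (P : Measure Ω) [IsProbabilityMeasure P] (ℱ : Filtration ℕ m0)
    (V : EuclideanSpace ℝ (Fin N) → ℝ) (γh : ℝ) (hγh : 0 < γh)
    (hdiff : Differentiable ℝ V)
    (hLip : LipschitzWith γh.toNNReal (gradient V))
    (Vinf : ℝ) (hbdd : ∀ x, Vinf ≤ V x)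
    (x₁ : EuclideanSpace ℝ (Fin N))
    (X G : ℕ → Ω → EuclideanSpace ℝ (Fin N))
    (α ζ₁ Q Qm : ℝ) (hζ₁ : 0 < ζ₁) (hQ : 0 ≤ Q) (hQm : ζ₁ ^ 2 ≤ Qm)
    (hα : 0 < α) (hαle : α ≤ ζ₁ / (γh * Qm))
    (hX1 : ∀ᵐ ω ∂P, X 1 ω = x₁)
    (hXmeas : ∀ k, StronglyMeasurable[ℱ k] (X k))
    (hGmeas : ∀ k, StronglyMeasurable[ℱ (k + 1)] (G k))
    (hGint : ∀ k, Integrable (fun ω => ‖G k ω‖ ^ 2) P)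
    (hupdate : ∀ k, 1 ≤ k → ∀ ω, X (k + 1) ω = X k ω - α • G k ω)
    (hinner : ∀ k, 1 ≤ k → ∀ᵐ ω ∂P,
      ζ₁ * ‖gradient V (X k ω)‖ ^ 2 ≤ ⟪gradient V (X k ω), (P[G k|ℱ k]) ω⟫)
    (hsecond : ∀ k, 1 ≤ k → ∀ᵐ ω ∂P,
      (P[(fun ω' => ‖G k ω'‖ ^ 2)|ℱ k]) ω ≤ Q + Qm * ‖gradient V (X k ω)‖ ^ 2) :
    ∀ m : ℕ, 1 ≤ m →
      (∑ k ∈ Finset.Icc 1 m, ∫ ω, ‖gradient V (X k ω)‖ ^ 2 ∂P) ≤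
        γh * m * α * Q / ζ₁ + 2 * (V x₁ - Vinf) / (ζ₁ * α) := by
  have hgc : Continuous (gradient V) := hLip.continuous
  have hXL2 : ∀ k, 1 ≤ k → MemLp (X k) 2 P := by
    intro k hk
    induction k, hk using Nat.le_induction with
    | base =>
      refine (memLp_congr_ae (f := X 1) (g := fun _ => x₁) hX1).2 (memLp_const _)
    | succ k hk ih =>
      have hG2 : MemLp (G k) 2 P :=
        (memLp_two_iff_integrable_sq_norm
          ((hGmeas k).mono (ℱ.le _)).aestronglyMeasurable).2 (hGint k)
      have : X (k + 1) = X k - α • G k := by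
        funext ω
        simpa using hupdate k hk ω
      rw [this]
      exact ih.sub (hG2.const_smul α)
  have hgL2 : ∀ k, 1 ≤ k → MemLp (fun ω => gradient V (X k ω)) 2 P := by
    intro k hk
    have hm : AEStronglyMeasurable (fun ω => gradient V (X k ω)) P :=
      hgc.comp_aestronglyMeasurable (hXL2 k hk).1
    refine MemLp.of_le (((hXL2 k hk).norm.const_mul γh).add
      (memLp_const (‖gradient V 0‖))) hm (ae_of_all _ fun ω => ?_)
    have h2 := hLip.norm_sub_le (X k ω) 0
    rw [Real.coe_toNNReal _ hγh.le, sub_zero] at h2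
    have h3 := norm_sub_norm_le (gradient V (X k ω)) (gradient V 0)
    refine le_trans ?_ (le_abs_self _)
    simp only [Pi.add_apply]
    linarith
  have hgint : ∀ k, 1 ≤ k → Integrable (fun ω => ‖gradient V (X k ω)‖ ^ 2) P := fun k hk =>
    (memLp_two_iff_integrable_sq_norm (hgL2 k hk).1).1 (hgL2 k hk)
  have hVint : ∀ k, 1 ≤ k → Integrable (fun ω => V (X k ω)) P := by
    intro k hk
    have hX2 := (memLp_two_iff_integrable_sq_norm (hXL2 k hk).1).1 (hXL2 k hk)
    have hX1 : Integrable (X k) P := (hXL2 k hk).integrable (by norm_num)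
    have hb : Integrable (fun ω => |Vinf| + (|V 0| + ‖gradient V 0‖ * ‖X k ω‖
        + γh / 2 * ‖X k ω‖ ^ 2)) P :=
      (integrable_const _).add (((integrable_const _).add (hX1.norm.const_mul _)).add
        (hX2.const_mul _))
    refine hb.mono' (hdiff.continuous.comp_aestronglyMeasurable (hXL2 k hk).1)
      (ae_of_all _ fun ω => ?_)
    have h1 := descent_aux V γh hγh hdiff hLip 0 (X k ω)
    rw [zero_add] at h1
    have h2 := real_inner_le_norm (gradient V 0) (X k ω)
    have h3 := hbdd (X k ω)
    have h4 := neg_abs_le Vinf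
    have h5 := le_abs_self (V 0)
    have h6 := abs_nonneg Vinf
    have h7 := abs_nonneg (V 0)
    have h8 : 0 ≤ ‖gradient V 0‖ * ‖X k ω‖ := by positivity
    have h9 : 0 ≤ γh / 2 * ‖X k ω‖ ^ 2 := by positivity
    rw [Real.norm_eq_abs, abs_le]
    constructor <;> linarith
  have hQmpos : 0 < Qm := lt_of_lt_of_le (by positivity) hQm
  have hstep : ∀ k, 1 ≤ k → ∫ ω, V (X (k + 1) ω) ∂P ≤ ∫ ω, V (X k ω) ∂P
      - α * ζ₁ / 2 * ∫ ω, ‖gradient V (X k ω)‖ ^ 2 ∂P + γh * α ^ 2 * Q / 2 := by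
    intro k hk
    have hG2 : MemLp (G k) 2 P :=
      (memLp_two_iff_integrable_sq_norm
        ((hGmeas k).mono (ℱ.le _)).aestronglyMeasurable).2 (hGint k)
    have hGi : Integrable (G k) P := hG2.integrable (by norm_num)
    have hgmk : StronglyMeasurable[ℱ k] (fun ω => gradient V (X k ω)) :=
      hgc.comp_stronglyMeasurable (hXmeas k)
    have hin : Integrable (fun ω => (⟪gradient V (X k ω), G k ω⟫ : ℝ)) P := by
      refine (((hgL2 k hk).norm.integrable_mul hG2.norm)).mono'
        ((hgL2 k hk).1.inner hG2.1) (ae_of_all _ fun ω => ?_)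
      exact norm_inner_le_norm _ _
    have hpull := condExp_bilin_of_stronglyMeasurable_left (μ := P) (m := ℱ k)
      (innerSL ℝ (E := EuclideanSpace ℝ (Fin N))) hgmk (g := G k) hin hGi
    have hI1 : ζ₁ * ∫ ω, ‖gradient V (X k ω)‖ ^ 2 ∂P
        ≤ ∫ ω, (⟪gradient V (X k ω), G k ω⟫ : ℝ) ∂P := by
      rw [← integral_condExp (ℱ.le k) (f := fun ω => (⟪gradient V (X k ω), G k ω⟫ : ℝ)),
        ← integral_const_mul]
      refine integral_mono_ae ((hgint k hk).const_mul _) integrable_condExp ?_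
      filter_upwards [hpull, hinner k hk] with ω h1 h2
      exact h2.trans (le_of_eq h1.symm)
    have hI2 : ∫ ω, ‖G k ω‖ ^ 2 ∂P ≤ Q + Qm * ∫ ω, ‖gradient V (X k ω)‖ ^ 2 ∂P := by
      have hh : ∫ ω, (Q + Qm * ‖gradient V (X k ω)‖ ^ 2) ∂P
          = Q + Qm * ∫ ω, ‖gradient V (X k ω)‖ ^ 2 ∂P := by
        rw [integral_add (integrable_const _) ((hgint k hk).const_mul _), integral_const_mul]
        simp
      rw [← hh, ← integral_condExp (ℱ.le k) (f := fun ω => ‖G k ω‖ ^ 2)]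
      exact integral_mono_ae integrable_condExp
        ((integrable_const _).add ((hgint k hk).const_mul _)) (hsecond k hk)
    have hI3 : ∫ ω, V (X (k + 1) ω) ∂P ≤ ∫ ω, (V (X k ω) - α * ⟪gradient V (X k ω), G k ω⟫
        + γh / 2 * α ^ 2 * ‖G k ω‖ ^ 2) ∂P := by
      refine integral_mono (hVint (k + 1) (by omega))
        (((hVint k hk).sub (hin.const_mul α)).add ((hGint k).const_mul _)) fun ω => ?_
      have h1 := descent_aux V γh hγh hdiff hLip (X k ω) (-(α • G k ω))
      rw [← sub_eq_add_neg, ← hupdate k hk ω, inner_neg_right, real_inner_smul_right, norm_neg,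
        norm_smul, Real.norm_of_nonneg hα.le, mul_pow] at h1
      change V (X (k + 1) ω) ≤ _
      linarith
    have hs : Integrable (fun ω => V (X k ω) - α * ⟪gradient V (X k ω), G k ω⟫) P :=
      (hVint k hk).sub (hin.const_mul α)
    rw [integral_add hs ((hGint k).const_mul _),
      integral_sub (hVint k hk) (hin.const_mul α), integral_const_mul, integral_const_mul] at hI3
    have hg0 : 0 ≤ ∫ ω, ‖gradient V (X k ω)‖ ^ 2 ∂P := integral_nonneg fun ω => by positivity
    have hαq : α * (γh * Qm) ≤ ζ₁ := (le_div_iff₀ (by positivity)).1 hαle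
    have e1 := mul_le_mul_of_nonneg_left hI1 hα.le
    have e2 := mul_le_mul_of_nonneg_left hI2 (by positivity : 0 ≤ γh / 2 * α ^ 2)
    have e3 := mul_le_mul_of_nonneg_left hαq
      (mul_nonneg (by positivity : 0 ≤ α / 2) hg0)
    nlinarith
  have hsum : ∀ m : ℕ, ∫ ω, V (X (m + 1) ω) ∂P + α * ζ₁ / 2 *
      (∑ k ∈ Finset.Icc 1 m, ∫ ω, ‖gradient V (X k ω)‖ ^ 2 ∂P)
      ≤ V x₁ + m * (γh * α ^ 2 * Q / 2) := by
    intro m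
    induction m with
    | zero =>
      have : ∫ ω, V (X 1 ω) ∂P = V x₁ := by
        rw [integral_congr_ae (g := fun _ => V x₁) (hX1.mono fun ω h => by simp [h])]
        simp
      simp [this]
    | succ n ih =>
      rw [Finset.sum_Icc_succ_top (by omega)]
      have := hstep (n + 1) (by omega)
      push_cast
      linarith
  intro m hm
  have h1 := hsum m
  have h2 : Vinf ≤ ∫ ω, V (X (m + 1) ω) ∂P := by
    have := integral_mono (μ := P) (integrable_const Vinf) (hVint (m + 1) (by omega))
      fun ω => hbdd _
    simpa using this
  have h3 : γh * m * α * Q / ζ₁ + 2 * (V x₁ - Vinf) / (ζ₁ * α)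
      = (V x₁ - Vinf + m * (γh * α ^ 2 * Q / 2)) / (α * ζ₁ / 2) := by
    field_simp
    ring
  rw [h3, le_div_iff₀ (by positivity)]
  linarith
end

section
/- (Theorem 3: convergence of CDSGD with diminishing step size, strongly convex case.) Let (Ω, ℱ, P) be a probability space with filtration (ℱ_k)_{k∈ℕ}. Let V : ℝ^N → ℝ be differentiable, H'-strongly convex (H' > 0) with minimizer value V*, and with ∇V Lipschitz continuous with constant γ' ≥ H'. Let (α_k)_{k≥1} be a positive nonincreasing sequence and let (X_k), (G_k) be random vectors with X₁ = x₁ ∈ ℝ^N almost surely, X_k ℱ_k-measurable, G_k ℱ_{k+1}-measurable with E[‖G_k‖²] < ∞, and X_{k+1} = X_k − α_k·G_k. Assume constants ζ₁ > 0, Q̂ ≥ 0, Q̂_m ≥ ζ₁² such that almost surely ⟨∇V(X_k), E[G_k | ℱ_k]⟩ ≥ ζ₁·‖∇V(X_k)‖² and E[‖G_k‖² | ℱ_k] ≤ Q̂ + Q̂_m·‖∇V(X_k)‖² for all k, that α₁ ≤ ζ₁/(γ'·Q̂_m), and that there exists β with sup_k (1 − α_k·H'·ζ₁) ≤ β < 1.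 Then for all k ≥ 2, E[V(X_k) − V*] ≤ β^{k−2}·(V(x₁) − V*) + (γ'·Q̂/2)·Σ_{p=1}^{k−2} β^{k−p−2}·α_p² + (γ'·Q̂/2)·α_{k−1}². -/
open MeasureTheory Filter
open scoped RealInnerProductSpace BigOperators

/-- Descent lemma for a function with Lipschitz gradient. -/
theorem descent_aux_s10 {E : Type*} [NormedAddCommGroup E] [InnerProductSpace ℝ E] [CompleteSpace E]
    (V : E → ℝ) (γ : ℝ) (hγ : 0 ≤ γ) (hdiff : Differentiable ℝ V)
    (hLip : LipschitzWith γ.toNNReal (gradient V)) (x d : E) :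
    V (x + d) ≤ V x + ⟪gradient V x, d⟫ + γ / 2 * ‖d‖ ^ 2 := by
  set g : ℝ → ℝ := fun t => V (x + t • d) - t * ⟪gradient V x, d⟫ - γ / 2 * ‖d‖ ^ 2 * t ^ 2
    with hg
  have hd : ∀ t, HasDerivAt g
      (⟪gradient V (x + t • d), d⟫ - ⟪gradient V x, d⟫ - γ * ‖d‖ ^ 2 * t) t := by
    intro t
    have h1 : HasDerivAt (fun t : ℝ => x + t • d) d t := by
      simpa using ((hasDerivAt_id t).smul_const d).const_add x
    have h2 := (hdiff (x + t • d)).hasGradientAt.hasFDerivAt.comp_hasDerivAt t h1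
    have h3 := (h2.sub ((hasDerivAt_id t).mul_const ⟪gradient V x, d⟫)).sub
      ((hasDerivAt_pow 2 t).const_mul (γ / 2 * ‖d‖ ^ 2))
    refine h3.congr_deriv ?_
    simp
    ring
  have hanti : AntitoneOn g (Set.Ici 0) := by
    refine antitoneOn_of_deriv_nonpos (convex_Ici 0)
      (fun t _ => (hd t).continuousAt.continuousWithinAt)
      (fun t _ => (hd t).differentiableAt.differentiableWithinAt) ?_
    intro t ht
    rw [interior_Ici] at ht
    have ht0 : 0 < t := ht
    rw [(hd t).deriv, ← inner_sub_left]
    have h1 := real_inner_le_norm (gradient V (x + t • d) - gradient V x) d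
    have h2 := hLip.dist_le_mul (x + t • d) x
    rw [dist_eq_norm, dist_eq_norm, Real.coe_toNNReal _ hγ, add_sub_cancel_left, norm_smul,
      Real.norm_eq_abs, abs_of_pos ht0] at h2
    have h3 := mul_le_mul_of_nonneg_right h2 (norm_nonneg d)
    nlinarith
  have := hanti (Set.mem_Ici.2 le_rfl) (Set.mem_Ici.2 zero_le_one) zero_le_one
  simp only [hg, one_smul, zero_smul, add_zero] at this
  linarith

/-- Theorem 3 (convergence of CDSGD with diminishing step size, strongly convex case):
`E[V(X_k) − V*] ≤ β^{k−2}·(V(x₁) − V*) + (γ'·Q̂/2)·Σ_{p=1}^{k−2} β^{k−p−2}·α_p²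
  + (γ'·Q̂/2)·α_{k−1}²`. -/
theorem cdsgd_diminishing_step_strongly_convex {N : ℕ} {Ω : Type*} {m0 : MeasurableSpace Ω}
    (P : Measure Ω) [IsProbabilityMeasure P] (ℱ : Filtration ℕ m0)
    (V : EuclideanSpace ℝ (Fin N) → ℝ) (H' γ' : ℝ)
    (hH' : 0 < H') (hH'γ' : H' ≤ γ')
    (hdiff : Differentiable ℝ V)
    (hsc : ∀ x y : EuclideanSpace ℝ (Fin N),
      V y ≥ V x + ⟪gradient V x, y - x⟫ + (H' / 2) * ‖y - x‖ ^ 2)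
    (hLip : LipschitzWith γ'.toNNReal (gradient V))
    (xstar : EuclideanSpace ℝ (Fin N)) (hmin : ∀ x, V xstar ≤ V x)
    (x₁ : EuclideanSpace ℝ (Fin N))
    (X G : ℕ → Ω → EuclideanSpace ℝ (Fin N))
    (α : ℕ → ℝ) (hαpos : ∀ k, 1 ≤ k → 0 < α k)
    (hαmono : ∀ k l, 1 ≤ k → k ≤ l → α l ≤ α k)
    (ζ₁ Q Qm : ℝ) (hζ₁ : 0 < ζ₁) (hQ : 0 ≤ Q) (hQm : ζ₁ ^ 2 ≤ Qm)
    (hα1 : α 1 ≤ ζ₁ / (γ' * Qm))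
    (β : ℝ) (hβlt : β < 1) (hβ : ∀ k, 1 ≤ k → 1 - α k * H' * ζ₁ ≤ β)
    (hX1 : ∀ᵐ ω ∂P, X 1 ω = x₁)
    (hXmeas : ∀ k, StronglyMeasurable[ℱ k] (X k))
    (hGmeas : ∀ k, StronglyMeasurable[ℱ (k + 1)] (G k))
    (hGint : ∀ k, Integrable (fun ω => ‖G k ω‖ ^ 2) P)
    (hupdate : ∀ k, 1 ≤ k → ∀ ω, X (k + 1) ω = X k ω - α k • G k ω)
    (hinner : ∀ k, 1 ≤ k → ∀ᵐ ω ∂P,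
      ζ₁ * ‖gradient V (X k ω)‖ ^ 2 ≤ ⟪gradient V (X k ω), (P[G k|ℱ k]) ω⟫)
    (hsecond : ∀ k, 1 ≤ k → ∀ᵐ ω ∂P,
      (P[(fun ω' => ‖G k ω'‖ ^ 2)|ℱ k]) ω ≤ Q + Qm * ‖gradient V (X k ω)‖ ^ 2) :
    ∀ k : ℕ, 2 ≤ k →
      (∫ ω, (V (X k ω) - V xstar) ∂P) ≤
        β ^ (k - 2) * (V x₁ - V xstar)
          + γ' * Q / 2 * ∑ p ∈ Finset.Icc 1 (k - 2), β ^ (k - p - 2) * (α p) ^ 2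
          + γ' * Q / 2 * (α (k - 1)) ^ 2 := by
  have hγ : 0 < γ' := lt_of_lt_of_le hH' hH'γ'
  have hQm0 : 0 < Qm := lt_of_lt_of_le (by positivity) hQm
  have hdesc := descent_aux_s10 V γ' hγ.le hdiff hLip
  have hgs : gradient V xstar = 0 := by
    have h1 : IsLocalMin V xstar := Filter.Eventually.of_forall hmin
    simp [gradient, h1.fderiv_eq_zero]
  have hPL : ∀ x, 2 * H' * (V x - V xstar) ≤ ‖gradient V x‖ ^ 2 := by
    intro x
    have h1 := hsc x xstar
    have h2 : 0 ≤ ‖gradient V x + H' • (xstar - x)‖ ^ 2 := by positivity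
    rw [norm_add_sq_real, norm_smul, Real.norm_eq_abs, abs_of_pos hH', inner_smul_right] at h2
    nlinarith
  have hle : ∀ x, V x - V xstar ≤ γ' / 2 * ‖x - xstar‖ ^ 2 := by
    intro x
    have h1 := hdesc xstar (x - xstar)
    rw [hgs] at h1
    simp at h1
    linarith
  have hgle : ∀ x, ‖gradient V x‖ ≤ γ' * ‖x - xstar‖ := by
    intro x
    have h2 := hLip.dist_le_mul x xstar
    rwa [dist_eq_norm, dist_eq_norm, Real.coe_toNNReal _ hγ.le, hgs, sub_zero] at h2
  have hαle : ∀ k, 1 ≤ k → γ' * Qm * α k ≤ ζ₁ := by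
    intro k hk
    have h1 := (hαmono 1 k le_rfl hk).trans hα1
    rw [le_div_iff₀ (by positivity)] at h1
    linarith
  have hβ0 : 0 ≤ β := by
    have h1 := hαle 1 le_rfl
    have h2 := hβ 1 le_rfl
    have h0 := hαpos 1 le_rfl
    have h3 : α 1 * H' * ζ₁ * ζ₁ ≤ 1 * ζ₁ := by
      calc α 1 * H' * ζ₁ * ζ₁ = α 1 * (H' * ζ₁ ^ 2) := by ring
        _ ≤ α 1 * (γ' * Qm) := by gcongr
        _ ≤ 1 * ζ₁ := by linarith
    have h4 := le_of_mul_le_mul_right h3 hζ₁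
    linarith
  have hXm : ∀ k, AEStronglyMeasurable (X k) P :=
    fun k => ((hXmeas k).mono (ℱ.le k)).aestronglyMeasurable
  have hGm : ∀ k, AEStronglyMeasurable (G k) P :=
    fun k => ((hGmeas k).mono (ℱ.le (k + 1))).aestronglyMeasurable
  have hG2 : ∀ k, MemLp (G k) 2 P := fun k =>
    (memLp_two_iff_integrable_sq_norm (hGm k)).2 (hGint k)
  have hX2 : ∀ k, 1 ≤ k → MemLp (X k) 2 P := by
    intro k hk
    induction k, hk using Nat.le_induction with
    | base =>
      refine (memLp_congr_ae (g := fun _ => x₁) ?_).2 (memLp_const x₁)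
      exact hX1
    | succ k hk ih =>
      have : X (k + 1) = X k - α k • G k := by
        funext ω
        exact hupdate k hk ω
      rw [this]
      exact ih.sub ((hG2 k).const_smul (α k))
  have hXs : ∀ k, 1 ≤ k → Integrable (fun ω => ‖X k ω - xstar‖ ^ 2) P := by
    intro k hk
    have := (hX2 k hk).sub (memLp_const xstar)
    exact (memLp_two_iff_integrable_sq_norm this.1).1 this
  have hVint : ∀ k, 1 ≤ k → Integrable (fun ω => V (X k ω) - V xstar) P := by
    intro k hk
    refine ((hXs k hk).const_mul (γ' / 2)).mono'
      ((hdiff.continuous.comp_aestronglyMeasurable (hXm k)).sub aestronglyMeasurable_const) ?_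
    refine ae_of_all _ fun ω => ?_
    rw [Real.norm_eq_abs, abs_of_nonneg (sub_nonneg.2 (hmin _))]
    exact hle _
  have hDsm : ∀ k, StronglyMeasurable[ℱ k] (fun ω => gradient V (X k ω)) :=
    fun k => hLip.continuous.comp_stronglyMeasurable (hXmeas k)
  have hDm : ∀ k, AEStronglyMeasurable (fun ω => gradient V (X k ω)) P :=
    fun k => ((hDsm k).mono (ℱ.le k)).aestronglyMeasurable
  have hDint : ∀ k, 1 ≤ k → Integrable (fun ω => ‖gradient V (X k ω)‖ ^ 2) P := by
    intro k hk
    refine ((hXs k hk).const_mul (γ' ^ 2)).mono' ((hDm k).norm.pow 2) ?_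
    refine ae_of_all _ fun ω => ?_
    rw [Real.norm_eq_abs, abs_of_nonneg (by positivity), ← mul_pow]
    exact pow_le_pow_left₀ (norm_nonneg _) (hgle _) 2
  have hIint : ∀ k, 1 ≤ k → Integrable (fun ω => ⟪gradient V (X k ω), G k ω⟫) P := by
    intro k hk
    refine ((hDint k hk).add (hGint k)).mono' ((hDm k).inner (hGm k)) ?_
    refine ae_of_all _ fun ω => ?_
    have h1 := norm_inner_le_norm (𝕜 := ℝ) (gradient V (X k ω)) (G k ω)
    simp only [Pi.add_apply]
    nlinarith [sq_nonneg (‖gradient V (X k ω)‖ - ‖G k ω‖), sq_nonneg ‖gradient V (X k ω)‖,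
      sq_nonneg ‖G k ω‖]
  have hinner' : ∀ k, 1 ≤ k → ζ₁ * ∫ ω, ‖gradient V (X k ω)‖ ^ 2 ∂P
      ≤ ∫ ω, ⟪gradient V (X k ω), G k ω⟫ ∂P := by
    intro k hk
    have h1 : P[fun ω => ⟪gradient V (X k ω), G k ω⟫|ℱ k] =ᵐ[P]
        fun ω => ⟪gradient V (X k ω), (P[G k|ℱ k]) ω⟫ :=
      condExp_bilin_of_stronglyMeasurable_left (innerSL ℝ) (hDsm k) (hIint k hk)
        ((hG2 k).integrable one_le_two)
    rw [← integral_condExp (ℱ.le k) (f := fun ω => ⟪gradient V (X k ω), G k ω⟫),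
      ← integral_const_mul]
    refine integral_mono_ae ((hDint k hk).const_mul _) integrable_condExp ?_
    filter_upwards [h1, hinner k hk] with ω h2 h3
    rw [h2]
    exact h3
  have hsecond' : ∀ k, 1 ≤ k → ∫ ω, ‖G k ω‖ ^ 2 ∂P
      ≤ Q + Qm * ∫ ω, ‖gradient V (X k ω)‖ ^ 2 ∂P := by
    intro k hk
    rw [← integral_condExp (ℱ.le k) (f := fun ω => ‖G k ω‖ ^ 2)]
    have h1 : Q + Qm * ∫ ω, ‖gradient V (X k ω)‖ ^ 2 ∂P
        = ∫ ω, (Q + Qm * ‖gradient V (X k ω)‖ ^ 2) ∂P := by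
      rw [integral_add (integrable_const _) ((hDint k hk).const_mul _), integral_const_mul]
      simp
    rw [h1]
    exact integral_mono_ae integrable_condExp
      ((integrable_const _).add ((hDint k hk).const_mul _)) (hsecond k hk)
  have he0 : ∀ k, 0 ≤ ∫ ω, (V (X k ω) - V xstar) ∂P :=
    fun k => integral_nonneg fun ω => sub_nonneg.2 (hmin _)
  have hstep : ∀ k, 1 ≤ k → ∫ ω, (V (X (k + 1) ω) - V xstar) ∂P ≤
      β * ∫ ω, (V (X k ω) - V xstar) ∂P + γ' * Q / 2 * α k ^ 2 := by
    intro k hk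
    have h1 : ∫ ω, (V (X (k + 1) ω) - V xstar) ∂P ≤
        ∫ ω, ((V (X k ω) - V xstar) - α k * ⟪gradient V (X k ω), G k ω⟫
          + γ' / 2 * α k ^ 2 * ‖G k ω‖ ^ 2) ∂P := by
      refine integral_mono (hVint (k + 1) (by omega))
        (((hVint k hk).sub ((hIint k hk).const_mul _)).add ((hGint k).const_mul _)) ?_
      intro ω
      have h2 := hdesc (X k ω) (-(α k • G k ω))
      rw [← sub_eq_add_neg, ← hupdate k hk ω, norm_neg, norm_smul, inner_neg_right,
        inner_smul_right, mul_pow, Real.norm_eq_abs, sq_abs] at h2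
      simp only
      linarith
    have hsub : Integrable (fun ω => (V (X k ω) - V xstar)
        - α k * ⟪gradient V (X k ω), G k ω⟫) P := (hVint k hk).sub ((hIint k hk).const_mul _)
    rw [integral_add hsub ((hGint k).const_mul _),
      integral_sub (hVint k hk) ((hIint k hk).const_mul _), integral_const_mul,
      integral_const_mul] at h1
    have h3 : 2 * H' * ∫ ω, (V (X k ω) - V xstar) ∂P
        ≤ ∫ ω, ‖gradient V (X k ω)‖ ^ 2 ∂P := by
      rw [← integral_const_mul]
      exact integral_mono ((hVint k hk).const_mul _) (hDint k hk) fun ω => hPL _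
    have h4 := hinner' k hk
    have h5 := hsecond' k hk
    have h6 := he0 k
    have h7 := hβ k hk
    have h8 := hαpos k hk
    have h9 := hαle k hk
    have ha : 0 ≤ ∫ ω, ‖gradient V (X k ω)‖ ^ 2 ∂P := integral_nonneg fun ω => by positivity
    generalize ∫ ω, (V (X (k + 1) ω) - V xstar) ∂P = e' at *
    generalize ∫ ω, (V (X k ω) - V xstar) ∂P = e at *
    generalize ∫ ω, ‖gradient V (X k ω)‖ ^ 2 ∂P = a at *
    generalize ∫ ω, ⟪gradient V (X k ω), G k ω⟫ ∂P = i at *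
    generalize ∫ ω, ‖G k ω‖ ^ 2 ∂P = g at *
    have b1 := mul_le_mul_of_nonneg_left h4 h8.le
    have b2 := mul_le_mul_of_nonneg_left h5 (show 0 ≤ γ' / 2 * α k ^ 2 by positivity)
    have b3 := mul_le_mul_of_nonneg_left h9 (show 0 ≤ α k / 2 * a by positivity)
    have b4 := mul_le_mul_of_nonneg_left h3 (show 0 ≤ α k * ζ₁ / 2 by positivity)
    have b5 := mul_le_mul_of_nonneg_right h7 h6
    linarith
  have hE1 : ∫ ω, (V (X 1 ω) - V xstar) ∂P = V x₁ - V xstar := by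
    rw [integral_congr_ae (g := fun _ => V x₁ - V xstar)]
    · simp
    · filter_upwards [hX1] with ω hω
      rw [hω]
  have hc : 0 ≤ γ' * Q / 2 := by positivity
  intro k hk
  obtain ⟨n, rfl⟩ := Nat.exists_eq_add_of_le' hk
  have hexp : ∀ p, n + 2 - p - 2 = n - p := fun p => by omega
  simp only [hexp, Nat.add_sub_cancel, show n + 2 - 1 = n + 1 from rfl]
  clear hexp hk
  induction n with
  | zero =>
    have h1 := hstep 1 le_rfl
    rw [hE1] at h1
    have h2 : 0 ≤ V x₁ - V xstar := sub_nonneg.2 (hmin _)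
    simp
    norm_num at h1
    nlinarith
  | succ n ih =>
    have h1 := hstep (n + 2) (by omega)
    have h2 := mul_le_mul_of_nonneg_left ih hβ0
    have h3 : ∑ p ∈ Finset.Icc 1 (n + 1), β ^ (n + 1 - p) * α p ^ 2
        = β * ∑ p ∈ Finset.Icc 1 n, β ^ (n - p) * α p ^ 2 + α (n + 1) ^ 2 := by
      rw [Finset.sum_Icc_succ_top (by omega), Finset.mul_sum]
      simp only [Nat.sub_self, pow_zero, one_mul]
      congr 1
      refine Finset.sum_congr rfl fun p hp => ?_
      rw [Nat.succ_sub (Finset.mem_Icc.1 hp).2, pow_succ]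
      ring
    rw [h3, pow_succ]
    have h4 : 0 ≤ (1 - β) * (γ' * Q / 2 * α (n + 1) ^ 2) :=
      mul_nonneg (by linarith) (by positivity)
    have h5 : n + 1 + 2 = n + 2 + 1 := rfl
    have h6 : n + 1 + 1 = n + 2 := rfl
    rw [h5, h6]
    linarith
end
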